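/- arXiv:math/0702490 — 9 statements merged into one kernel-verified Lean document; each statement's English description precedes it below -/
import Mathlib

section
/- The element ρ = Σ_{u∈G} δ_e ⊗ u of the algebra A is a two-sided integral element: for every h ∈ A one has ρ·h = ε(h)·ρ and h·ρ = ε(h)·ρ. -/
open scoped Classical

/-- The product of the algebra A (with basis δ_s ⊗ u, s ∈ M, u ∈ G), extended
bilinearly from
(δ_s ⊗ u)(δ_t ⊗ v) = δ_{t,s◁u} δ_{s◁τ(a,b)} ⊗ τ(a,b)⁻¹ u v,
where a = ⟨δ_s ⊗ u⟩, b = ⟨δ_t ⊗ v⟩. -/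
noncomputable def mulA {k : Type*} [Field k] {X : Type*} [Group X]
    (G : Subgroup X) (M : Set X)
    (tau : ↥M → ↥M → ↥G) (lho : ↥M → ↥G → ↥M) (br : ↥M → ↥G → ↥M)
    (f g : (↥M × ↥G) →₀ k) : (↥M × ↥G) →₀ k :=
  f.sum fun p c => g.sum fun q d =>
    if q.1 = lho p.1 p.2 then
      Finsupp.single
        (lho p.1 (tau (br p.1 p.2) (br q.1 q.2)),
          (tau (br p.1 p.2) (br q.1 q.2))⁻¹ * p.2 * q.2) (c * d)
    else 0

/-- The counit ε : A → k, ε(δ_t ⊗ v) = δ_{t,e}, extended linearly. -/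
noncomputable def epsA {k : Type*} [Field k] {X : Type*} [Group X]
    (G : Subgroup X) (M : Set X)
    (f : (↥M × ↥G) →₀ k) : k :=
  f.sum fun p c => if (p.1 : X) = 1 then c else 0

/-- The element ρ = Σ_{u ∈ G} δ_e ⊗ u of the algebra A is a
two-sided integral element: for every h ∈ A one has ρ·h = ε(h)·ρ and
h·ρ = ε(h)·ρ. -/
theorem statement0 {k : Type*} [Field k] {X : Type*} [Group X] [Fintype X]
    [DecidableEq X]
    (G : Subgroup X) (M : Set X) [Fintype ↥G]
    (hM1 : (1 : X) ∈ M)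
    (hfac : ∀ x : X, ∃! p : ↥G × ↥M, x = (p.1 : X) * (p.2 : X))
    (tau : ↥M → ↥M → ↥G) (mdot : ↥M → ↥M → ↥M)
    (htau : ∀ s t : ↥M, (s : X) * (t : X) = (tau s t : X) * (mdot s t : X))
    (rho : ↥M → ↥G → ↥G) (lho : ↥M → ↥G → ↥M)
    (hact : ∀ (s : ↥M) (u : ↥G), (s : X) * (u : X) = (rho s u : X) * (lho s u : X))
    (hbij : ∀ s : ↥M, Function.Bijective (mdot s))
    (br : ↥M → ↥G → ↥M)
    (hbr : ∀ (s : ↥M) (u : ↥G), mdot s (br s u) = lho s u) :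
    ∀ h : (↥M × ↥G) →₀ k,
      mulA G M tau lho br
          (∑ u : ↥G, Finsupp.single ((⟨1, hM1⟩ : ↥M), u) (1 : k)) h
        = epsA G M h • (∑ u : ↥G, Finsupp.single ((⟨1, hM1⟩ : ↥M), u) (1 : k))
      ∧ mulA G M tau lho br h
          (∑ u : ↥G, Finsupp.single ((⟨1, hM1⟩ : ↥M), u) (1 : k))
        = epsA G M h • (∑ u : ↥G, Finsupp.single ((⟨1, hM1⟩ : ↥M), u) (1 : k)) := by
  intro h
  have uniq : ∀ (u v : ↥G) (s t : ↥M), (u : X) * (s : X) = (v : X) * (t : X) → u = v ∧ s = t := by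
    intro u v s t hh
    have := (hfac ((u : X) * (s : X))).unique (y₁ := (u, s)) (y₂ := (v, t)) rfl hh
    exact Prod.mk.inj this
  obtain ⟨e, he⟩ : ∃ e : ↥M, e = ⟨1, hM1⟩ := ⟨_, rfl⟩
  have he1 : (e : X) = 1 := by rw [he]
  rw [← he]
  have hmd : ∀ a, tau e a = 1 ∧ mdot e a = a := by
    intro a
    apply uniq
    rw [← htau, he1]; simp
  have hl : ∀ u, lho e u = e := by
    intro u
    refine (uniq (rho e u) u _ _ ?_).2
    rw [← hact, he1]; simp
  have hb : ∀ u, br e u = e := by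
    intro u
    rw [← (hmd (br e u)).2, hbr, hl]
  have hle : ∀ s u, e = lho s u ↔ s = e := by
    intro s u
    constructor
    · intro h1
      have h2 := hact s u
      rw [← h1, he1, mul_one] at h2
      refine (uniq 1 (rho s u * u⁻¹) s e ?_).2
      rw [he1]
      push_cast
      rw [← h2]; simp
    · rintro rfl
      exact (hl u).symm
  have hee : ∀ s : ↥M, (s : X) = 1 ↔ s = e := by
    intro s
    rw [← he1, Subtype.ext_iff]
  constructor
  · unfold mulA epsA
    rw [← Finsupp.sum_finset_sum_index]
    · simp only [Finsupp.sum, Finset.sum_smul]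
      have : ∀ u : ↥G, (Finsupp.single (e, u) (1 : k)).support = {(e, u)} := fun u =>
        Finsupp.support_single_ne_zero _ one_ne_zero
      simp only [this, Finset.sum_singleton]
      rw [Finset.sum_comm]
      refine Finset.sum_congr rfl fun q _ => ?_
      by_cases hq : q.1 = e
      · simp only [hl, hb, hq, hmd, he1, if_true, Finsupp.single_eq_same, one_mul, inv_one]
        rw [Finset.smul_sum]
        simp only [Finsupp.smul_single, smul_eq_mul, mul_one]
        exact Equiv.sum_comp (Equiv.mulRight q.2) (fun w => Finsupp.single (e, w) (h q))
      · simp [hl, hee, hq]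
    · intro p; simp [Finsupp.sum]
    · intro p b c
      simp only [Finsupp.sum, ← Finset.sum_add_distrib]
      refine Finset.sum_congr rfl fun q _ => ?_
      split_ifs <;> simp [add_mul]
  · unfold mulA epsA
    rw [Finsupp.sum, Finsupp.sum, Finset.sum_smul]
    refine Finset.sum_congr rfl fun p _ => ?_
    rw [← Finsupp.sum_finset_sum_index]
    · have hs : ∀ u : ↥G, (Finsupp.single (e, u) (1 : k)).support = {(e, u)} := fun u =>
        Finsupp.support_single_ne_zero _ one_ne_zero
      simp only [Finsupp.sum, hs, Finset.sum_singleton, hle, hee]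
      by_cases hp : p.1 = e
      · simp only [hl, hb, hp, hmd, if_true, Finsupp.single_eq_same, one_mul, inv_one]
        rw [Finset.smul_sum]
        simp only [Finsupp.smul_single, smul_eq_mul, mul_one]
        exact Equiv.sum_comp (Equiv.mulLeft p.2) (fun w => Finsupp.single (e, w) (h p))
      · simp [hp]
    · intro p; simp
    · intro q b c
      split_ifs <;> simp [mul_add]
end

section
/- If φ : V → Ṽ and ψ : W → W̃ are type B morphisms between objects of 𝒞, then the linear map φ ⊠ ψ : V ⊗ W → W̃ ⊗ Ṽ defined on homogeneous elements by (φ ⊠ ψ)(ξ ⊗ η) = (ψ(η)◁τ(a^L, a)^{-1} ⊗ φ(ξ))◁τ(a, b), where a = ⟨ξ⟩ and b = ⟨η⟩, is a type B morphism; that is, ⟨(φ ⊠ ψ)(ξ ⊗ η)⟩ = (a·b)^L and (φ ⊠ ψ)((ξ ⊗ η)◁u) = ((φ ⊠ ψ)(ξ ⊗ η))◁((a·b)▷u) for all u ∈ G. -/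
open scoped TensorProduct

/-- An object of the category 𝒞: a finite-dimensional k-vector space with a
direct sum decomposition V = ⊕_{s ∈ M} V_s and a right G-action ξ ↦ ξ◁u
compatible with the grading via ◁ : M × G → M. -/
structure CObj (k : Type*) [Field k] {X : Type*} [Group X] [DecidableEq X]
    (G : Subgroup X) (M : Set X) (lho : ↥M → ↥G → ↥M) where
  V : Type*
  [acg : AddCommGroup V]
  [mod : Module k V]
  grade : ↥M → Submodule k V
  act : ↥G → V →ₗ[k] V
  act_one : ∀ ξ : V, act 1 ξ = ξ
  act_mul : ∀ (u v : ↥G) (ξ : V), act v (act u ξ) = act (u * v) ξ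
  act_grade : ∀ (s : ↥M) (u : ↥G), ∀ ξ ∈ grade s, act u ξ ∈ grade (lho s u)
  isInternal : DirectSum.IsInternal grade
  finiteDim : FiniteDimensional k V

attribute [instance] CObj.acg CObj.mod

/-- A type A morphism in 𝒞: grade-preserving and G-equivariant on homogeneous
elements. -/
def IsTypeA {k : Type*} [Field k] {X : Type*} [Group X] [DecidableEq X]
    {G : Subgroup X} {M : Set X} {lho : ↥M → ↥G → ↥M}
    (V W : CObj k G M lho) (φ : V.V →ₗ[k] W.V) : Prop :=
  ∀ (s : ↥M) (ξ : V.V), ξ ∈ V.grade s →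
    φ ξ ∈ W.grade s ∧ ∀ u : ↥G, φ (V.act u ξ) = W.act u (φ ξ)

/-- A type B morphism in 𝒞: ⟨φ(ξ)⟩ = ⟨ξ⟩^L and φ(ξ◁u) = φ(ξ)◁(⟨ξ⟩▷u) on
homogeneous elements. -/
def IsTypeB {k : Type*} [Field k] {X : Type*} [Group X] [DecidableEq X]
    {G : Subgroup X} {M : Set X} {lho : ↥M → ↥G → ↥M}
    (L : ↥M → ↥M) (rho : ↥M → ↥G → ↥G)
    (V W : CObj k G M lho) (φ : V.V →ₗ[k] W.V) : Prop :=
  ∀ (s : ↥M) (ξ : V.V), ξ ∈ V.grade s →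
    φ ξ ∈ W.grade (L s) ∧ ∀ u : ↥G, φ (V.act u ξ) = W.act (rho s u) (φ ξ)

/-- The value of the map φ ⊠ ψ : V ⊗ W → W̃ ⊗ Ṽ on a pair of homogeneous
elements ξ (of grade a) and η (of grade b):
(φ ⊠ ψ)(ξ ⊗ η) = (ψ(η)◁τ(a^L, a)⁻¹ ⊗ φ(ξ))◁τ(a, b)
              = ψ(η)◁(τ(a^L, a)⁻¹ (a^L▷τ(a, b))) ⊗ φ(ξ)◁τ(a, b),
using the tensor product G-action (x ⊗ y)◁u = x◁(⟨y⟩▷u) ⊗ y◁u and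
⟨φ(ξ)⟩ = a^L. -/
noncomputable def boxEl {k : Type*} [Field k] {X : Type*} [Group X]
    [DecidableEq X] {G : Subgroup X} {M : Set X} {lho : ↥M → ↥G → ↥M}
    (tau : ↥M → ↥M → ↥G) (rho : ↥M → ↥G → ↥G) (L : ↥M → ↥M)
    {V W Vt Wt : CObj k G M lho}
    (φ : V.V →ₗ[k] Vt.V) (ψ : W.V →ₗ[k] Wt.V)
    (a b : ↥M) (ξ : V.V) (η : W.V) : Wt.V ⊗[k] Vt.V :=
  (Wt.act (rho (L a) (tau a b)) (Wt.act (tau (L a) a)⁻¹ (ψ η)))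
    ⊗ₜ[k] (Vt.act (tau a b) (φ ξ))

/-- If φ : V → Ṽ and ψ : W → W̃ are type B morphisms between
objects of 𝒞, then φ ⊠ ψ : V ⊗ W → W̃ ⊗ Ṽ is a type B morphism: on homogeneous
ξ of grade a and η of grade b one has ⟨(φ ⊠ ψ)(ξ ⊗ η)⟩ = (a·b)^L (the grade of
the tensor being the · product of the grades of the factors), and
(φ ⊠ ψ)((ξ ⊗ η)◁u) = ((φ ⊠ ψ)(ξ ⊗ η))◁((a·b)▷u), where on tensor products
(ξ ⊗ η)◁u = ξ◁(b▷u) ⊗ η◁u. -/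
theorem statement2 {k : Type*} [Field k] {X : Type*} [Group X] [Fintype X]
    [DecidableEq X]
    (G : Subgroup X) (M : Set X)
    (hM1 : (1 : X) ∈ M)
    (hfac : ∀ x : X, ∃! p : ↥G × ↥M, x = (p.1 : X) * (p.2 : X))
    (tau : ↥M → ↥M → ↥G) (mdot : ↥M → ↥M → ↥M)
    (htau : ∀ s t : ↥M, (s : X) * (t : X) = (tau s t : X) * (mdot s t : X))
    (rho : ↥M → ↥G → ↥G) (lho : ↥M → ↥G → ↥M)
    (hact : ∀ (s : ↥M) (u : ↥G), (s : X) * (u : X) = (rho s u : X) * (lho s u : X))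
    (L : ↥M → ↥M)
    (hL : ∀ s : ↥M, (mdot (L s) s : X) = 1)
    (hLuniq : ∀ s t : ↥M, (mdot t s : X) = 1 → t = L s)
    (hLL : ∀ s : ↥M, L (L s) = s)
    (hLrho : ∀ (s : ↥M) (u : ↥G), rho (L s) (rho s u) = u)
    (V W Vt Wt : CObj k G M lho)
    (φ : V.V →ₗ[k] Vt.V) (ψ : W.V →ₗ[k] Wt.V)
    (hφ : IsTypeB L rho V Vt φ) (hψ : IsTypeB L rho W Wt ψ) :
    ∀ (a b : ↥M) (ξ : V.V) (η : W.V), ξ ∈ V.grade a → η ∈ W.grade b →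
      -- grade condition: ⟨(φ ⊠ ψ)(ξ ⊗ η)⟩ = (a·b)^L
      (mdot (lho (lho (L b) ((tau (L a) a)⁻¹)) (rho (L a) (tau a b)))
          (lho (L a) (tau a b))
        = L (mdot a b))
      -- action condition: (φ ⊠ ψ)((ξ ⊗ η)◁u) = ((φ ⊠ ψ)(ξ ⊗ η))◁((a·b)▷u)
      ∧ ∀ u : ↥G,
          boxEl tau rho L φ ψ (lho a (rho b u)) (lho b u)
              (V.act (rho b u) ξ) (W.act u η)
            = (Wt.act (rho (lho (L a) (tau a b)) (rho (mdot a b) u))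
                  (Wt.act (rho (L a) (tau a b)) (Wt.act (tau (L a) a)⁻¹ (ψ η))))
                ⊗ₜ[k] (Vt.act (rho (mdot a b) u) (Vt.act (tau a b) (φ ξ))) := by
  have uq : ∀ (u v : ↥G) (s t : ↥M), (u : X) * (s : X) = (v : X) * (t : X) → u = v ∧ s = t := by
    intro u v s t h
    have := (hfac ((u : X) * (s : X))).unique (y₁ := (u, s)) (y₂ := (v, t)) rfl h
    exact ⟨congrArg Prod.fst this, congrArg Prod.snd this⟩
  have hLa : ∀ a : ↥M, ((L a : ↥M) : X) * (a : X) = (tau (L a) a : X) := by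
    intro a
    rw [htau, hL, mul_one]
  have mkL : ∀ (p c : ↥M) (g : ↥G), (p : X) * (c : X) = (g : X) → p = L c ∧ tau p c = g := by
    intro p c g h
    have h2 := uq (tau p c) g (mdot p c) ⟨1, hM1⟩ (by rw [← htau, h]; simp)
    exact ⟨hLuniq c p (by rw [h2.2]), h2.1⟩
  have rhomul : ∀ (s : ↥M) (u v : ↥G), rho s (u * v) = rho s u * rho (lho s u) v := by
    intro s u v
    refine (uq _ _ (lho s (u * v)) (lho (lho s u) v) ?_).1
    rw [← hact]
    push_cast
    rw [← mul_assoc, hact s u, mul_assoc, hact (lho s u) v, mul_assoc]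
  have key : ∀ (a : ↥M) (u : ↥G), lho (L a) (rho a u) = L (lho a u) ∧
      tau (L (lho a u)) (lho a u) = u⁻¹ * tau (L a) a * u := by
    intro a u
    have h := mkL (lho (L a) (rho a u)) (lho a u) (u⁻¹ * tau (L a) a * u) (by
      have h1 := hact a u
      have h2 := hact (L a) (rho a u)
      rw [hLrho] at h2
      push_cast
      rw [← hLa, eq_inv_mul_of_mul_eq h2.symm, eq_inv_mul_of_mul_eq h1.symm]
      group)
    exact ⟨h.1, by rw [← h.1]; exact h.2⟩
  intro a b ξ η hξ hη
  constructor
  · have e1 := hact (L a) (tau a b)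
    have e2 := hact (L b) (tau (L a) a)⁻¹
    have e3 := hact (lho (L b) (tau (L a) a)⁻¹) (rho (L a) (tau a b))
    have e4 := htau a b
    have e5 := htau (lho (lho (L b) ((tau (L a) a)⁻¹)) (rho (L a) (tau a b)))
          (lho (L a) (tau a b))
    refine (mkL _ _ ((tau (lho (lho (L b) ((tau (L a) a)⁻¹)) (rho (L a) (tau a b)))
          (lho (L a) (tau a b)))⁻¹ *
        (rho (lho (L b) (tau (L a) a)⁻¹) (rho (L a) (tau a b)))⁻¹ *
        (rho (L b) (tau (L a) a)⁻¹)⁻¹ * tau (L b) b) ?_).1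
    push_cast at e2 ⊢
    rw [← hLa b, eq_inv_mul_of_mul_eq e5.symm, eq_inv_mul_of_mul_eq e3.symm,
      eq_inv_mul_of_mul_eq e2.symm, eq_inv_mul_of_mul_eq e1.symm,
      eq_inv_mul_of_mul_eq e4.symm, ← hLa a]
    group
  · intro u
    have w : rho a (rho b u) * tau (lho a (rho b u)) (lho b u)
        = tau a b * rho (mdot a b) u := by
      refine (uq _ _ (mdot (lho a (rho b u)) (lho b u)) (lho (mdot a b) u) ?_).1
      push_cast
      rw [mul_assoc, ← htau, ← mul_assoc, ← hact, mul_assoc, ← hact, mul_assoc, ← hact,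
        ← mul_assoc, ← mul_assoc, htau]
    unfold boxEl
    rw [(hφ a ξ hξ).2, (hψ b η hη).2]
    simp only [CObj.act_mul]
    rw [w, (key a (rho b u)).2]
    congr 2
    congr 1
    rw [mul_assoc (tau (L a) a)⁻¹, ← rhomul, ← w, rhomul, hLrho, (key a (rho b u)).1]
    group
end

section
/- The linear map P : A → A defined by P(δ_s ⊗ u) = δ_{s◁(u τ(a^L, a)^{-1})} ⊗ τ(a^L, a) u^{-1}, where a = ⟨δ_s ⊗ u⟩, is a type B morphism: ⟨P(δ_s ⊗ u)⟩ = a^L, and P((δ_s ⊗ u)◁v) = P(δ_s ⊗ u)◁(a▷v) for all v ∈ G. -/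
/-- On basis indices, the map P : A → A,
P(δ_s ⊗ u) = δ_{s◁(u τ(a^L,a)⁻¹)} ⊗ τ(a^L,a) u⁻¹, where a = ⟨δ_s ⊗ u⟩. -/
noncomputable def PIdx {X : Type*} [Group X] (G : Subgroup X) (M : Set X)
    (tau : ↥M → ↥M → ↥G) (lho : ↥M → ↥G → ↥M) (br : ↥M → ↥G → ↥M)
    (L : ↥M → ↥M) (p : ↥M × ↥G) : ↥M × ↥G :=
  (lho p.1 (p.2 * (tau (L (br p.1 p.2)) (br p.1 p.2))⁻¹),
    tau (L (br p.1 p.2)) (br p.1 p.2) * p.2⁻¹)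

/-- On basis indices, the right G-action on A:
(δ_s ⊗ u)◁v = δ_{s◁(a▷v)} ⊗ (a▷v)⁻¹ u v, where a = ⟨δ_s ⊗ u⟩. -/
noncomputable def actIdx {X : Type*} [Group X] (G : Subgroup X) (M : Set X)
    (rho : ↥M → ↥G → ↥G) (lho : ↥M → ↥G → ↥M) (br : ↥M → ↥G → ↥M)
    (p : ↥M × ↥G) (v : ↥G) : ↥M × ↥G :=
  (lho p.1 (rho (br p.1 p.2) v), (rho (br p.1 p.2) v)⁻¹ * p.2 * v)

/-- The linear map P : A → A defined by
P(δ_s ⊗ u) = δ_{s◁(u τ(a^L,a)⁻¹)} ⊗ τ(a^L,a) u⁻¹, a = ⟨δ_s ⊗ u⟩, is a type B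
morphism: ⟨P(δ_s ⊗ u)⟩ = a^L and P((δ_s ⊗ u)◁v) = P(δ_s ⊗ u)◁(a▷v) for all
v ∈ G. -/
theorem statement5 {k : Type*} [Field k] {X : Type*} [Group X] [Fintype X]
    [DecidableEq X]
    (G : Subgroup X) (M : Set X)
    (hM1 : (1 : X) ∈ M)
    (hfac : ∀ x : X, ∃! p : ↥G × ↥M, x = (p.1 : X) * (p.2 : X))
    (tau : ↥M → ↥M → ↥G) (mdot : ↥M → ↥M → ↥M)
    (htau : ∀ s t : ↥M, (s : X) * (t : X) = (tau s t : X) * (mdot s t : X))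
    (rho : ↥M → ↥G → ↥G) (lho : ↥M → ↥G → ↥M)
    (hact : ∀ (s : ↥M) (u : ↥G), (s : X) * (u : X) = (rho s u : X) * (lho s u : X))
    (hbij : ∀ s : ↥M, Function.Bijective (mdot s))
    (br : ↥M → ↥G → ↥M)
    (hbr : ∀ (s : ↥M) (u : ↥G), mdot s (br s u) = lho s u)
    (hbrgrade : ∀ (s : ↥M) (u v : ↥G),
      br (lho s (rho (br s u) v)) ((rho (br s u) v)⁻¹ * u * v) = lho (br s u) v)
    (L : ↥M → ↥M)
    (hL : ∀ s : ↥M, (mdot (L s) s : X) = 1)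
    (hLuniq : ∀ s t : ↥M, (mdot t s : X) = 1 → t = L s)
    (hLL : ∀ s : ↥M, L (L s) = s)
    (hLrho : ∀ (s : ↥M) (u : ↥G), rho (L s) (rho s u) = u) :
    ∀ (s : ↥M) (u : ↥G),
      -- grade condition: ⟨P(δ_s ⊗ u)⟩ = a^L where a = ⟨δ_s ⊗ u⟩
      br (PIdx G M tau lho br L (s, u)).1 (PIdx G M tau lho br L (s, u)).2
        = L (br s u)
      -- action condition: P((δ_s ⊗ u)◁v) = P(δ_s ⊗ u)◁(a▷v)
      ∧ ∀ v : ↥G,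
          Finsupp.lmapDomain k k (PIdx G M tau lho br L)
              (Finsupp.lmapDomain k k (fun p => actIdx G M rho lho br p v)
                (Finsupp.single (s, u) (1 : k)))
            = Finsupp.lmapDomain k k
                (fun p => actIdx G M rho lho br p (rho (br s u) v))
                (Finsupp.lmapDomain k k (PIdx G M tau lho br L)
                  (Finsupp.single (s, u) (1 : k))) := by
  have key : ∀ (g g' : ↥G) (m m' : ↥M), (g : X) * (m : X) = (g' : X) * (m' : X) →
      g = g' ∧ m = m' := by
    intro g g' m m' h
    have h2 := (hfac ((g : X) * (m : X))).unique (y₁ := (g, m)) (y₂ := (g', m')) rfl h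
    exact ⟨congrArg Prod.fst h2, congrArg Prod.snd h2⟩
  have hll : ∀ (s : ↥M) (u v : ↥G), lho (lho s u) v = lho s (u * v) := by
    intro s u v
    refine (key (rho s u * rho (lho s u) v) (rho s (u * v)) _ _ ?_).2
    rw [← hact s (u * v)]
    push_cast
    rw [mul_assoc, ← hact (lho s u) v, ← mul_assoc, ← hact s u, mul_assoc]
  have hl1 : ∀ s : ↥M, lho s 1 = s := by
    intro s
    refine (key (rho s 1) 1 _ _ ?_).2
    rw [← hact s 1]
    simp
  have hLa : ∀ a : ↥M, ((L a : ↥M) : X) * (a : X) = (tau (L a) a : X) := by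
    intro a
    rw [htau, hL, mul_one]
  have hgr : ∀ (s : ↥M) (u : ↥G),
      br (PIdx G M tau lho br L (s, u)).1 (PIdx G M tau lho br L (s, u)).2
        = L (br s u) := by
    intro s u
    simp only [PIdx]
    obtain ⟨a, ha⟩ : ∃ a, a = br s u := ⟨_, rfl⟩
    rw [← ha]
    obtain ⟨t, ht⟩ : ∃ t, t = tau (L a) a := ⟨_, rfl⟩
    rw [← ht]
    apply (hbij (lho s (u * t⁻¹))).1
    rw [hbr, hll, show u * t⁻¹ * (t * u⁻¹) = 1 by group, hl1]
    symm
    have h1 := hact s (u * t⁻¹)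
    have h2 := htau (lho s (u * t⁻¹)) (L a)
    have h3 := hLa a
    have h4 := htau s a
    have h5 := hact s u
    rw [ha, hbr, ← ha] at h4
    rw [← ht] at h3
    refine (key (rho s (u * t⁻¹) * tau (lho s (u * t⁻¹)) (L a)) (rho s u * (tau s a)⁻¹) _ _ ?_).2
    push_cast at h1 ⊢
    rw [mul_assoc, ← h2, ← mul_assoc, ← h1]
    have h6 : ((L a : ↥M) : X) = (t : X) * (a : X)⁻¹ := by rw [← h3]; group
    have h7 : (lho s u : X) = (tau s a : X)⁻¹ * ((s : X) * (a : X)) := by rw [h4]; group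
    have h8 : (s : X) * (u : X) = (rho s u : X) * ((tau s a : X)⁻¹ * ((s : X) * (a : X))) := by
      rw [h5, h7]
    have h9 : (rho s u : X) * (tau s a : X)⁻¹ * (s : X) = (s : X) * (u : X) * (a : X)⁻¹ := by
      rw [h8]; group
    rw [h9, h6]
    group
  intro s u
  refine ⟨hgr s u, fun v => ?_⟩
  simp only [Finsupp.lmapDomain_apply, Finsupp.mapDomain_single]
  congr 1
  have hg := hgr s u
  rw [actIdx, actIdx, hg, hLrho]
  simp only [actIdx, PIdx, hbrgrade, hll]
  obtain ⟨a, ha⟩ : ∃ a, a = br s u := ⟨_, rfl⟩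
  rw [← ha]
  have e1 : (tau (L a) a : X) * (v : X)
      = (v : X) * ((lho (L a) (rho a v) : X) * (lho a v : X)) := by
    have := hact (L a) (rho a v)
    rw [hLrho] at this
    rw [← hLa, mul_assoc, hact a v, ← mul_assoc, this, mul_assoc]
  have e2 := key (tau (L a) a * v) (v * tau (lho (L a) (rho a v)) (lho a v)) ⟨1, hM1⟩
    (mdot (lho (L a) (rho a v)) (lho a v)) (by
      push_cast
      rw [mul_one, e1, htau, mul_assoc])
  have e3 := hLuniq _ _ (congrArg Subtype.val e2.2).symm
  have e4 := e2.1
  rw [e3] at e4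
  have e5 : tau (L (lho a v)) (lho a v) = v⁻¹ * tau (L a) a * v := by
    rw [mul_assoc, e4]; group
  rw [e5]
  refine Prod.ext ?_ ?_
  · show lho s _ = lho s _
    congr 1
    group
  · show _ * _ = _ * _
    group
end

section
/- For every basis element δ_s ⊗ u of A one has P(P(δ_s ⊗ u)◁τ(a, a^L)) = δ_s ⊗ u, where a = ⟨δ_s ⊗ u⟩ and P : A → A is defined by P(δ_s ⊗ u) = δ_{s◁(u τ(a^L, a)^{-1})} ⊗ τ(a^L, a) u^{-1}. -/
/-- For every basis element δ_s ⊗ u of A one has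
P(P(δ_s ⊗ u)◁τ(a, a^L)) = δ_s ⊗ u, where a = ⟨δ_s ⊗ u⟩. -/
theorem statement6 {k : Type*} [Field k] {X : Type*} [Group X] [Fintype X]
    [DecidableEq X]
    (G : Subgroup X) (M : Set X)
    (hM1 : (1 : X) ∈ M)
    (hfac : ∀ x : X, ∃! p : ↥G × ↥M, x = (p.1 : X) * (p.2 : X))
    (tau : ↥M → ↥M → ↥G) (mdot : ↥M → ↥M → ↥M)
    (htau : ∀ s t : ↥M, (s : X) * (t : X) = (tau s t : X) * (mdot s t : X))
    (rho : ↥M → ↥G → ↥G) (lho : ↥M → ↥G → ↥M)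
    (hact : ∀ (s : ↥M) (u : ↥G), (s : X) * (u : X) = (rho s u : X) * (lho s u : X))
    (hbij : ∀ s : ↥M, Function.Bijective (mdot s))
    (br : ↥M → ↥G → ↥M)
    (hbr : ∀ (s : ↥M) (u : ↥G), mdot s (br s u) = lho s u)
    (L : ↥M → ↥M)
    (hL : ∀ s : ↥M, (mdot (L s) s : X) = 1)
    (hLuniq : ∀ s t : ↥M, (mdot t s : X) = 1 → t = L s)
    (hLL : ∀ s : ↥M, L (L s) = s) :
    ∀ (s : ↥M) (u : ↥G),
      Finsupp.lmapDomain k k (PIdx G M tau lho br L)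
          (Finsupp.lmapDomain k k
            (fun p => actIdx G M rho lho br p (tau (br s u) (L (br s u))))
            (Finsupp.lmapDomain k k (PIdx G M tau lho br L)
              (Finsupp.single (s, u) (1 : k))))
        = Finsupp.single (s, u) (1 : k) := by
  intro s u
  have key : ∀ (g : ↥G) (m n : ↥M), (m : X) = (g : X) * (n : X) → m = n ∧ g = 1 := by
    intro g m n h
    obtain ⟨p, _, hp⟩ := hfac (m : X)
    have h1 := hp (1, m) (by simp)
    have h2 := hp (g, n) h
    have h3 := h1.trans h2.symm
    exact ⟨congrArg Prod.snd h3, (congrArg Prod.fst h3).symm⟩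
  have hlho : ∀ (m : ↥M) (v : ↥G), (lho m v : X) = ((rho m v)⁻¹ : ↥G) * (m : X) * (v : X) := by
    intro m v
    have := hact m v
    rw [mul_assoc, this]; simp
  have lho_eq : ∀ (g : ↥G) (m n : ↥M) (v : ↥G), (m : X) * v = (g : X) * n → lho m v = n := by
    intro g m n v h
    refine (key ((rho m v)⁻¹ * g) _ _ ?_).1
    rw [hlho, mul_assoc, h]; simp [mul_assoc]
  have br_eq : ∀ (g : ↥G) (m c : ↥M) (v : ↥G), (m : X) * c = (g : X) * ((m : X) * v) →
      br m v = c := by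
    intro g m c v h
    apply (hbij m).1
    rw [hbr]
    refine lho_eq (g⁻¹ * tau m c) _ _ _ ?_
    have := htau m c
    rw [h] at this
    simp only [Subgroup.coe_mul, Subgroup.coe_inv, mul_assoc]
    rw [← this]; simp
  have hbr' : ∃ g : ↥G, (s : X) * (u : X) = (g : X) * ((s : X) * (br s u : X)) := by
    refine ⟨rho s u * (tau s (br s u))⁻¹, ?_⟩
    rw [hact, htau, hbr]; simp [mul_assoc]
  obtain ⟨g, hg⟩ := hbr'
  have ht : ∀ a : ↥M, (tau (L a) a : X) = (L a : X) * a := by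
    intro a
    rw [htau, hL, mul_one]
  have hv : ∀ a : ↥M, (tau a (L a) : X) = (a : X) * L a := by
    intro a
    have := ht (L a)
    rwa [hLL] at this
  generalize ha : br s u = a at *
  generalize htt : tau (L a) a = t
  generalize hvv : tau a (L a) = v
  have ht' : (t : X) = L a * a := by rw [← htt, ht]
  have hv' : (v : X) = a * L a := by rw [← hvv, hv]
  have P1 : PIdx G M tau lho br L (s, u) = (lho s (u * t⁻¹), t * u⁻¹) := by
    simp only [PIdx, ha, htt]
  have hs1 := hlho s (u * t⁻¹)
  generalize lho s (u * t⁻¹) = s1 at *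
  generalize (rho s (u * t⁻¹))⁻¹ = r at *
  have hsu : (s : X) * u * (a : X)⁻¹ = g * s := by rw [hg]; group
  have hsa : (s : X) * u = g * s * a := by rw [hg]; group
  have hu : (u : X) = (s : X)⁻¹ * g * s * a := by
    rw [mul_assoc, mul_assoc, ← mul_assoc (g : X), ← hsa]; group
  have b1 : br s1 (t * u⁻¹) = L a := by
    refine br_eq (r * g * r⁻¹) _ _ _ ?_
    rw [hs1]
    push_cast
    rw [ht', hu]
    group
  have w1 : rho (L a) v = t := by
    have h := hact (L a) v
    have h2 := key ((rho (L a) v)⁻¹ * t) (lho (L a) v) (L a) (by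
      rw [hlho]; push_cast; rw [ht', hv']; group)
    exact (inv_mul_eq_one.mp h2.2)
  have A1 : actIdx G M rho lho br (s1, t * u⁻¹) v = (lho s1 t, u⁻¹ * v) := by
    simp only [actIdx, b1, w1]
    congr 1; group
  have hs2 := hlho s1 t
  generalize lho s1 t = s2 at *
  generalize (rho s1 t)⁻¹ = q at *
  have hs2' : (s2 : X) = q * r * s * u := by
    rw [hs2, hs1]; push_cast; group
  have b2 : br s2 (u⁻¹ * v) = L a := by
    refine br_eq (q * r * g * r⁻¹ * q⁻¹) _ _ _ ?_
    rw [hs2']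
    push_cast
    rw [hv', hu]
    group
  have P2 : PIdx G M tau lho br L (s2, u⁻¹ * v) = (s, u) := by
    simp only [PIdx, b2, hLL, hvv]
    have : lho s2 (u⁻¹ * v * v⁻¹) = s := by
      refine lho_eq (q * r) _ _ _ ?_
      rw [hs2']; push_cast; group
    rw [this]
    congr 1; group
  simp only [Finsupp.lmapDomain_apply, Finsupp.mapDomain_single, P1, A1, P2]
end

section
/- Suppose every s ∈ M has a unique left inverse s^L and s^{LL} = s for all s ∈ M. Then for every s ∈ M: (i) s·s^L = e, so s^L is also a right inverse of s (s^L = s^R), and (ii) s^L◁τ(s, s^L) = s^L. -/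
/-- In the coset-representative setting (X a finite group, G ≤ X,
M ⊆ X with 1 ∈ M and unique factorization X = G·M, with τ, ·, ▷, ◁ defined by
unique factorization), if every s ∈ M has a unique left inverse s^L (meaning
s^L·s = e, and t·s = e implies t = s^L) and s^{LL} = s for all s, then for every
s ∈ M: (i) s·s^L = e (so s^L is also a right inverse of s), and
(ii) s^L◁τ(s, s^L) = s^L. -/
theorem statement7 {X : Type*} [Group X] [Fintype X]
    (G : Subgroup X) (M : Set X)
    (hM1 : (1 : X) ∈ M)
    (hfac : ∀ x : X, ∃! p : ↥G × ↥M, x = (p.1 : X) * (p.2 : X))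
    (tau : ↥M → ↥M → ↥G) (mdot : ↥M → ↥M → ↥M)
    (htau : ∀ s t : ↥M, (s : X) * (t : X) = (tau s t : X) * (mdot s t : X))
    (rho : ↥M → ↥G → ↥G) (lho : ↥M → ↥G → ↥M)
    (hact : ∀ (s : ↥M) (u : ↥G), (s : X) * (u : X) = (rho s u : X) * (lho s u : X))
    (L : ↥M → ↥M)
    (hL : ∀ s : ↥M, (mdot (L s) s : X) = 1)
    (hLuniq : ∀ s t : ↥M, (mdot t s : X) = 1 → t = L s)
    (hLL : ∀ s : ↥M, L (L s) = s) :
    ∀ s : ↥M, (mdot s (L s) : X) = 1 ∧ lho (L s) (tau s (L s)) = L s := by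
  intro s
  have h1 : (mdot s (L s) : X) = 1 := by
    have h := hL (L s)
    rwa [hLL] at h
  refine ⟨h1, ?_⟩
  have h2 := htau s (L s)
  have h3 := htau (L s) s
  rw [h1, mul_one] at h2
  rw [hL, mul_one] at h3
  have h4 : ((L s : ↥M) : X) * (tau s (L s) : X) = (tau (L s) s : X) * ((L s : ↥M) : X) := by
    rw [← h2, ← h3, mul_assoc]
  have h5 := (hfac (((L s : ↥M) : X) * (tau s (L s) : X))).unique
    (y₁ := (rho (L s) (tau s (L s)), lho (L s) (tau s (L s))))
    (y₂ := (tau (L s) s, L s)) (hact _ _) h4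
  exact congrArg Prod.snd h5
end

section
/- Suppose every s ∈ M has a unique left inverse s^L and s^{LL} = s for all s ∈ M. Then for every a ∈ M one has a^L▷τ(a, a^L) = τ(a^L, a). -/
/-- If every s ∈ M has a unique left inverse s^L and s^{LL} = s
for all s ∈ M, then for every a ∈ M one has a^L▷τ(a, a^L) = τ(a^L, a). -/
theorem statement8 {X : Type*} [Group X] [Fintype X]
    (G : Subgroup X) (M : Set X)
    (hM1 : (1 : X) ∈ M)
    (hfac : ∀ x : X, ∃! p : ↥G × ↥M, x = (p.1 : X) * (p.2 : X))
    (tau : ↥M → ↥M → ↥G) (mdot : ↥M → ↥M → ↥M)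
    (htau : ∀ s t : ↥M, (s : X) * (t : X) = (tau s t : X) * (mdot s t : X))
    (rho : ↥M → ↥G → ↥G) (lho : ↥M → ↥G → ↥M)
    (hact : ∀ (s : ↥M) (u : ↥G), (s : X) * (u : X) = (rho s u : X) * (lho s u : X))
    (L : ↥M → ↥M)
    (hL : ∀ s : ↥M, (mdot (L s) s : X) = 1)
    (hLuniq : ∀ s t : ↥M, (mdot t s : X) = 1 → t = L s)
    (hLL : ∀ s : ↥M, L (L s) = s) :
    ∀ a : ↥M, rho (L a) (tau a (L a)) = tau (L a) a := by
  intro a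
  have h1 : (a : X) * (L a : X) = (tau a (L a) : X) := by
    have h := hL (L a)
    rw [hLL] at h
    rw [htau, h, mul_one]
  have h2 : (L a : X) * (a : X) = (tau (L a) a : X) := by
    rw [htau, hL, mul_one]
  have h3 : (L a : X) * (tau a (L a) : X) = (tau (L a) a : X) * (L a : X) := by
    rw [← h1, ← h2, mul_assoc]
  have h4 := (hfac ((L a : X) * (tau a (L a) : X))).unique
    (y₁ := (rho (L a) (tau a (L a)), lho (L a) (tau a (L a))))
    (y₂ := (tau (L a) a, L a)) (hact _ _) h3
  exact congrArg Prod.fst h4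
end

section
/- Assume every s ∈ M has a unique left inverse s^L and a unique right inverse s^R, and that (s^L)^R = s for all s ∈ M. For an object V of 𝒞, define the bar object V̄ = V with grading ⟨ξ̄⟩ = ⟨ξ⟩^R and G-action ξ̄◁u = ξ◁(⟨ξ⟩^R▷u). Then the grading and the G-action of V̄ are consistent: ⟨ξ̄◁u⟩ = ⟨ξ̄⟩◁u for all homogeneous ξ and u ∈ G; equivalently, (s◁(s^R▷u))^R = s^R◁u for all s ∈ M, u ∈ G. -/
/-- Assume every s ∈ M has a unique left inverse s^L and a
unique right inverse s^R, and that (s^L)^R = s for all s ∈ M. For an object V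
of 𝒞 the bar object V̄ = V with grading ⟨ξ̄⟩ = ⟨ξ⟩^R and G-action
ξ̄◁u = ξ◁(⟨ξ⟩^R▷u) has consistent grading and action: ⟨ξ̄◁u⟩ = ⟨ξ̄⟩◁u;
equivalently, (s◁(s^R▷u))^R = s^R◁u for all s ∈ M, u ∈ G. -/
theorem statement9 {X : Type*} [Group X] [Fintype X]
    (G : Subgroup X) (M : Set X)
    (hM1 : (1 : X) ∈ M)
    (hfac : ∀ x : X, ∃! p : ↥G × ↥M, x = (p.1 : X) * (p.2 : X))
    (tau : ↥M → ↥M → ↥G) (mdot : ↥M → ↥M → ↥M)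
    (htau : ∀ s t : ↥M, (s : X) * (t : X) = (tau s t : X) * (mdot s t : X))
    (rho : ↥M → ↥G → ↥G) (lho : ↥M → ↥G → ↥M)
    (hact : ∀ (s : ↥M) (u : ↥G), (s : X) * (u : X) = (rho s u : X) * (lho s u : X))
    (L : ↥M → ↥M)
    (hL : ∀ s : ↥M, (mdot (L s) s : X) = 1)
    (hLuniq : ∀ s t : ↥M, (mdot t s : X) = 1 → t = L s)
    (R : ↥M → ↥M)
    (hR : ∀ s : ↥M, (mdot s (R s) : X) = 1)
    (hRuniq : ∀ s t : ↥M, (mdot s t : X) = 1 → t = R s)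
    (hLR : ∀ s : ↥M, R (L s) = s) :
    ∀ (s : ↥M) (u : ↥G), R (lho s (rho (R s) u)) = lho (R s) u := by
  intro s u
  symm
  apply hRuniq
  set v := rho (R s) u with hv
  set a := lho s v with ha
  set b := lho (R s) u with hb
  have h1 : (s : X) * (R s : X) = (tau s (R s) : X) := by
    rw [htau, hR, mul_one]
  have h2 : (R s : X) * (u : X) = (v : X) * (b : X) := hact (R s) u
  have h3 : (s : X) * (v : X) = (rho s v : X) * (a : X) := hact s v
  have h4 : (a : X) * (b : X) = (tau a b : X) * (mdot a b : X) := htau a b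
  have h5 : (tau s (R s) : X) * (u : X)
      = (rho s v : X) * ((tau a b : X) * (mdot a b : X)) := by
    rw [← h1, mul_assoc, h2, ← mul_assoc, h3, mul_assoc, h4]
  have hG : (mdot a b : X) ∈ G := by
    have h6 : (mdot a b : X)
        = (((tau a b)⁻¹ * (rho s v)⁻¹ * (tau s (R s) * u) : ↥G) : X) := by
      push_cast
      rw [h5]
      group
    rw [h6]
    exact SetLike.coe_mem _
  have h7 := (hfac (mdot a b : X)).unique
    (y₁ := ((1 : ↥G), mdot a b)) (y₂ := ((⟨_, hG⟩ : ↥G), (⟨1, hM1⟩ : ↥M)))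
    (by simp) (by simp)
  have h8 := congrArg (fun p : ↥G × ↥M => (p.2 : X)) h7
  exact h8
end

section
/- Assume every s ∈ M has a unique right inverse s^R. For an object V of 𝒞, let V̿ denote the double-bar object: V̿ = V with grading ⟨ξ̿⟩ = ⟨ξ⟩^{RR} and G-action ξ̿◁u = ξ◁(⟨ξ⟩^R▷(⟨ξ⟩^{RR}▷u)). Then the map Ω_V : V̿ → V given by Ω_V(ξ̿) = ξ◁τ(⟨ξ⟩^R, ⟨ξ⟩^{RR}) is a type A morphism, and it is natural: for every type A morphism φ : V → W one has φ ∘ Ω_V = Ω_W ∘ φ̿, where φ̿ : V̿ → W̿ equals φ as a linear map. -/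
/-- Assume every s ∈ M has a unique right inverse s^R. For an
object V of 𝒞 let V̿ be the double-bar object (V̿ = V with grading
⟨ξ̿⟩ = ⟨ξ⟩^{RR} and G-action ξ̿◁u = ξ◁(⟨ξ⟩^R▷(⟨ξ⟩^{RR}▷u))). Then
Ω_V : V̿ → V, Ω_V(ξ̿) = ξ◁τ(⟨ξ⟩^R, ⟨ξ⟩^{RR}), is a type A morphism:
its value on a homogeneous ξ of grade s lies in grade s^{RR} = ⟨ξ̿⟩, and it
intertwines the double-bar G-action with the G-action of V; moreover it is
natural: φ ∘ Ω_V = Ω_W ∘ φ̿ for every type A morphism φ : V → W. -/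
theorem statement10 {k : Type*} [Field k] {X : Type*} [Group X] [Fintype X]
    [DecidableEq X]
    (G : Subgroup X) (M : Set X)
    (hM1 : (1 : X) ∈ M)
    (hfac : ∀ x : X, ∃! p : ↥G × ↥M, x = (p.1 : X) * (p.2 : X))
    (tau : ↥M → ↥M → ↥G) (mdot : ↥M → ↥M → ↥M)
    (htau : ∀ s t : ↥M, (s : X) * (t : X) = (tau s t : X) * (mdot s t : X))
    (rho : ↥M → ↥G → ↥G) (lho : ↥M → ↥G → ↥M)
    (hact : ∀ (s : ↥M) (u : ↥G), (s : X) * (u : X) = (rho s u : X) * (lho s u : X))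
    (R : ↥M → ↥M)
    (hR : ∀ s : ↥M, (mdot s (R s) : X) = 1)
    (hRuniq : ∀ s t : ↥M, (mdot s t : X) = 1 → t = R s)
    (V W : CObj k G M lho) :
    -- Ω_V is a type A morphism V̿ → V :
    (∀ (s : ↥M) (ξ : V.V), ξ ∈ V.grade s →
      -- grade condition: ⟨Ω_V(ξ̿)⟩ = s^{RR} = ⟨ξ̿⟩
      (V.act (tau (R s) (R (R s))) ξ ∈ V.grade (R (R s))
      -- action condition: Ω_V(ξ̿◁u) = Ω_V(ξ̿)◁u
      ∧ ∀ u : ↥G,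
          V.act (tau (R (lho s (rho (R s) (rho (R (R s)) u))))
              (R (R (lho s (rho (R s) (rho (R (R s)) u))))))
            (V.act (rho (R s) (rho (R (R s)) u)) ξ)
          = V.act u (V.act (tau (R s) (R (R s))) ξ)))
    -- naturality: φ ∘ Ω_V = Ω_W ∘ φ̿ for every type A morphism φ : V → W
    ∧ ∀ (φ : V.V →ₗ[k] W.V), IsTypeA V W φ →
        ∀ (s : ↥M) (ξ : V.V), ξ ∈ V.grade s →
          φ (V.act (tau (R s) (R (R s))) ξ)
            = W.act (tau (R s) (R (R s))) (φ ξ) := by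
  have uq : ∀ (g g' : ↥G) (m m' : ↥M), (g : X) * (m : X) = (g' : X) * (m' : X) → m = m' := by
    intro g g' m m' h
    have := (hfac ((g : X) * (m : X))).unique (y₁ := (g, m)) (y₂ := (g', m')) rfl h
    exact congrArg Prod.snd this
  have hab : ∀ s : ↥M, (s : X) * (R s : X) = (tau s (R s) : X) := by
    intro s
    rw [htau, hR, mul_one]
  have hRof : ∀ (s t : ↥M) (g : ↥G), (s : X) * (t : X) = (g : X) → t = R s := by
    intro s t g h
    apply hRuniq
    have := uq (tau s t) g (mdot s t) ⟨1, hM1⟩ (by rw [← htau, h, mul_one])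
    rw [this]
  have key : ∀ (s : ↥M) (u : ↥G), lho (R s) u = R (lho s (rho (R s) u)) := by
    intro s u
    apply hRof _ _ ((rho s (rho (R s) u))⁻¹ * (tau s (R s) * u))
    push_cast
    rw [eq_inv_mul_iff_mul_eq, ← mul_assoc, ← hact, mul_assoc, ← hact, ← mul_assoc, hab]
  refine ⟨fun s ξ hξ => ⟨?_, fun u => ?_⟩, fun φ hφ s ξ hξ => (hφ s ξ hξ).2 _⟩
  · have h : lho s (tau (R s) (R (R s))) = R (R s) := by
      apply uq (rho s (tau (R s) (R (R s)))) (tau s (R s))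
      rw [← hact, ← hab, ← hab, mul_assoc]
    have h2 := V.act_grade s (tau (R s) (R (R s))) ξ hξ
    rwa [h] at h2
  · rw [V.act_mul, V.act_mul]
    congr 2
    apply Subtype.ext
    push_cast
    rw [← hab, ← hab, ← key, ← key, ← mul_assoc, ← hact, mul_assoc, ← hact, mul_assoc]
end

section
/- Assume every a ∈ M has a unique left inverse a^L. Then for all a ∈ M and v ∈ G: (i) a^L◁(a▷v) = (a◁v)^L, and (ii) v · τ((a◁v)^L, a◁v)^{-1} = τ(a^L, a)^{-1} (a^L▷(a▷v)) as elements of G. -/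
/-- Assume every a ∈ M has a unique left inverse a^L. Then for
all a ∈ M and v ∈ G: (i) a^L◁(a▷v) = (a◁v)^L, and
(ii) v · τ((a◁v)^L, a◁v)⁻¹ = τ(a^L, a)⁻¹ (a^L▷(a▷v)) as elements of G. -/
theorem statement17 {X : Type*} [Group X] [Fintype X]
    (G : Subgroup X) (M : Set X)
    (hM1 : (1 : X) ∈ M)
    (hfac : ∀ x : X, ∃! p : ↥G × ↥M, x = (p.1 : X) * (p.2 : X))
    (tau : ↥M → ↥M → ↥G) (mdot : ↥M → ↥M → ↥M)
    (htau : ∀ s t : ↥M, (s : X) * (t : X) = (tau s t : X) * (mdot s t : X))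
    (rho : ↥M → ↥G → ↥G) (lho : ↥M → ↥G → ↥M)
    (hact : ∀ (s : ↥M) (u : ↥G), (s : X) * (u : X) = (rho s u : X) * (lho s u : X))
    (L : ↥M → ↥M)
    (hL : ∀ s : ↥M, (mdot (L s) s : X) = 1)
    (hLuniq : ∀ s t : ↥M, (mdot t s : X) = 1 → t = L s) :
    ∀ (a : ↥M) (v : ↥G),
      lho (L a) (rho a v) = L (lho a v)
      ∧ v * (tau (L (lho a v)) (lho a v))⁻¹
          = (tau (L a) a)⁻¹ * rho (L a) (rho a v) := by
  intro a v
  have h1 := htau (L a) a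
  rw [hL, mul_one] at h1
  have h2 := hact a v
  have h3 := hact (L a) (rho a v)
  have h4 := htau (lho (L a) (rho a v)) (lho a v)
  have h5 : (lho (L a) (rho a v) : X) * (lho a v : X)
      = (rho (L a) (rho a v) : X)⁻¹ * ((tau (L a) a : X) * v) := by
    rw [eq_inv_mul_iff_mul_eq, ← mul_assoc, ← h3, mul_assoc, ← h2, ← mul_assoc, h1]
  have key := (hfac ((lho (L a) (rho a v) : X) * (lho a v : X))).unique
    (y₁ := (tau (lho (L a) (rho a v)) (lho a v), mdot (lho (L a) (rho a v)) (lho a v)))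
    (y₂ := ((rho (L a) (rho a v))⁻¹ * (tau (L a) a * v), ⟨1, hM1⟩))
    h4 (by simpa using h5)
  have k1 := congrArg Prod.fst key
  have k2 := congrArg Prod.snd key
  simp only at k1 k2
  have e : lho (L a) (rho a v) = L (lho a v) := hLuniq _ _ (by rw [k2])
  refine ⟨e, ?_⟩
  rw [← e, k1]
  group
end
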